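/- Let ε ∈ (0,1) be irrational with continued fraction expansion ε = [0; a_1, a_2, …], let ℓ satisfy max{ε, 1−ε} < ℓ < 1, and let x0 ∈ [0,ℓ). If the 3iet word u_{ε,ℓ,x0} has infinite index, ind(u_{ε,ℓ,x0}) = +∞, then the sequence of partial quotients (a_n)_{n≥1} is unbounded, i.e. sup_{n} a_n = +∞. -/

import Mathlib

/-!
Bounded partial quotients make `ε` badly approximable: `q |qε - p| ≥ c > 0` for all `q ≥ 1` and
all `p`.

If the word has period `p` on a window of length `(K + 1)p` starting at the orbit point `x`, then
`T^{j+p} x = T^j x + δ` for all `j ≤ Kp`, where `δ = P - Qε` with `p ≤ Q ≤ 2p`, so `|δ| ≥ c/(2p)`.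
Since `T^j x` and `T^j x + δ` lie in the same exchanged interval for `j < Kp`, this orbit segment
misses an interval of length `|δ|` adjacent to the discontinuity `ε`; it lies inside `[0,ℓ)` for
large `K`, because `T^{Kp} x = x + Kδ` forces `|δ| < 1/K`.

But `T` is the map induced on `[0,ℓ)` by the rotation by `-ε`, and, by Dirichlet's theorem, the
first `Kp` points of a rotation orbit of a badly approximable `ε` meet every arc of length
`3/(cKp)`. For `K ≥ 6/c²` such an arc fits into the missed interval.
-/

/-- The alphabet of 3iet words. -/
inductive L3 | A | B | C
deriving DecidableEq, Inhabited

/-- The three-interval exchange transformation `T_{ε,ℓ}`. -/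
noncomputable def T3 (ε ℓ : ℝ) (x : ℝ) : ℝ :=
  if x < ℓ - 1 + ε then x + 1 - ε
  else if x < ε then x + 1 - 2*ε
  else x - ε

/-- The 3iet word `u_{ε,ℓ,x0}` coding the orbit of `x0` under `T_{ε,ℓ}`. -/
noncomputable def u3 (ε ℓ x0 : ℝ) (n : ℕ) : L3 :=
  if (T3 ε ℓ)^[n] x0 < ℓ - 1 + ε then L3.A
  else if (T3 ε ℓ)^[n] x0 < ε then L3.B
  else L3.C

/-- The two-interval exchange transformation `T_ε`. -/
noncomputable def T2 (ε : ℝ) (x : ℝ) : ℝ := if x < ε then x + 1 - ε else x - ε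

/-- The Sturmian word `u_{ε,x0}` of slope `ε` coding the orbit of `x0` under `T_ε`
(letter `0` is `false`, letter `1` is `true`). -/
noncomputable def u2 (ε x0 : ℝ) (n : ℕ) : Bool := if (T2 ε)^[n] x0 < ε then false else true

/-- `w` is a factor of the infinite word `u`. -/
def IsFactor {α : Type*} (w : List α) (u : ℕ → α) : Prop :=
  ∃ i : ℕ, w = (List.range w.length).map fun j => u (i + j)

/-- The prefix of length `m` of the periodic infinite word `www⋯`;
for `|w| ≤ m` this is the fractional power `w^{m/|w|}`. -/
def powPrefix {α : Type*} [Inhabited α] (w : List α) (m : ℕ) : List α :=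
  (List.range m).map fun j => w.getD (j % w.length) default

/-- The index of the factor `w` in the infinite word `u`:
`sup {r ∈ ℚ, r ≥ 1, r|w| ∈ ℕ | w^r is a factor of u}`, as an element of `ℝ ∪ {+∞}`. -/
noncomputable def factorIndex {α : Type*} [Inhabited α] (u : ℕ → α) (w : List α) : EReal :=
  sSup {x : EReal | ∃ m : ℕ, w.length ≤ m ∧ IsFactor (powPrefix w m) u ∧
    x = (((m : ℝ) / (w.length : ℝ) : ℝ) : EReal)}

/-- The index of the infinite word `u`: `sup {ind(w) | w a nonempty factor of u}`. -/
noncomputable def wordIndex {α : Type*} [Inhabited α] (u : ℕ → α) : EReal :=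
  sSup {x : EReal | ∃ w : List α, w ≠ [] ∧ IsFactor w u ∧ x = factorIndex u w}

/-- The Gauss map `x ↦ {1/x}`. -/
noncomputable def gaussMap (x : ℝ) : ℝ := Int.fract x⁻¹

/-- `cfa ε n` is the partial quotient `a_{n+1}` of the continued fraction
expansion `ε = [0; a₁, a₂, a₃, …]` of the irrational `ε ∈ (0,1)`. -/
noncomputable def cfa (ε : ℝ) (n : ℕ) : ℕ := ⌊(gaussMap^[n] ε)⁻¹⌋₊

/-- The morphism `σ01 : A ↦ 0, B ↦ 01, C ↦ 1`. -/
def sigma01 : L3 → List Bool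
  | L3.A => [false]
  | L3.B => [false, true]
  | L3.C => [true]

/-- The morphism `σ10 : A ↦ 0, B ↦ 10, C ↦ 1`. -/
def sigma10 : L3 → List Bool
  | L3.A => [false]
  | L3.B => [true, false]
  | L3.C => [true]

/-- The image `φ(u₀)φ(u₁)φ(u₂)⋯` of an infinite word `u` under a (nonerasing) morphism `φ`. -/
def morphWord (φ : L3 → List Bool) (u : ℕ → L3) (m : ℕ) : Bool :=
  ((List.range (m+1)).flatMap fun k => φ (u k)).getD m false

/-- `u` is a uniformly recurrent infinite word: every factor occurs infinitely often
with bounded gaps (every window of some length `R` contains an occurrence). -/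
def UniformlyRecurrent {α : Type*} (u : ℕ → α) : Prop :=
  ∀ w : List α, IsFactor w u → ∃ R : ℕ, ∀ i : ℕ, ∃ j : ℕ, i ≤ j ∧ j < i + R ∧
    w = (List.range w.length).map fun t => u (j + t)

/-- `u` is eventually periodic. -/
def EventuallyPeriodic {α : Type*} (u : ℕ → α) : Prop :=
  ∃ N p : ℕ, 0 < p ∧ ∀ n : ℕ, N ≤ n → u (n + p) = u n

/-- The standard words of `ε = [0; a₁, a₂, …]`, with the index shifted by one:
`sw ε 0 = s₋₁ = 1`, `sw ε 1 = s₀ = 0`, `sw ε 2 = s₁ = s₀^{a₁-1} s₋₁`, and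
`sw ε (n+3) = s_{n+2} = s_{n+1}^{a_{n+2}} s_n`. -/
noncomputable def sw (ε : ℝ) : ℕ → List Bool
  | 0 => [true]
  | 1 => [false]
  | 2 => (List.replicate (cfa ε 0 - 1) ([false] : List Bool)).flatten ++ [true]
  | (n+3) => (List.replicate (cfa ε (n+1)) (sw ε (n+2))).flatten ++ sw ε (n+1)

/-- Denominators of the convergents of `ε`, shifted by one: `qq ε 0 = q₋₁ = 0`,
`qq ε 1 = q₀ = 1`, and `qq ε (n+2) = q_{n+1} = a_{n+1} q_n + q_{n-1}`. -/
noncomputable def qq (ε : ℝ) : ℕ → ℕ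
  | 0 => 0
  | 1 => 1
  | (n+2) => cfa ε n * qq ε (n+1) + qq ε n

/-- `u` is a 3iet word. -/
def Is3ietWord (u : ℕ → L3) : Prop :=
  ∃ ε ℓ x0 : ℝ, Irrational ε ∧ 0 < ε ∧ ε < 1 ∧ max ε (1 - ε) < ℓ ∧ ℓ < 1 ∧
    x0 ∈ Set.Ico 0 ℓ ∧ u = u3 ε ℓ x0

/-- `v` is a Sturmian word. -/
def IsSturmianWord (v : ℕ → Bool) : Prop :=
  ∃ ε x0 : ℝ, Irrational ε ∧ 0 < ε ∧ ε < 1 ∧ x0 ∈ Set.Ico (0:ℝ) 1 ∧ v = u2 ε x0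

/-- The infinite binary word `v1` is amicable with `v2` (`v1 ∝ v2`). -/
def AmicableInf (v1 v2 : ℕ → Bool) : Prop :=
  ∃ w : ℕ → L3, v1 = morphWord sigma01 w ∧ v2 = morphWord sigma10 w

/-- The morphism `Φ_k : A ↦ 0, B ↦ 01^{k+1}, C ↦ 01^k`. -/
def Phi (k : ℕ) : L3 → List Bool
  | L3.A => [false]
  | L3.B => false :: List.replicate (k+1) true
  | L3.C => false :: List.replicate k true

/-- The infinite word `B₀B₁B₂⋯` obtained by concatenating the sequence of
(nonempty) blocks `B`. -/
def concatOfBlocks (B : ℕ → List Bool) (m : ℕ) : Bool :=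
  ((List.range (m+1)).flatMap B).getD m false

/-! ### Bounded partial quotients and bad approximability -/

/-- `x ∈ (0,1)` is an irrational number of bounded type: all its partial quotients are at most
`M`. -/
structure IsBoundedType (M : ℕ) (x : ℝ) : Prop where
  irrational : Irrational x
  pos : 0 < x
  lt_one : x < 1
  cfa_le : ∀ n, cfa x n ≤ M

/-- `x` is badly approximable with constant `c`: every fraction `p / q` satisfies
`|x - p / q| ≥ c / q²`. The inequality is multiplied by `q²` to avoid divisions. -/
def BadlyApproximableWith (c x : ℝ) : Prop :=
  ∀ q : ℕ, 0 < q → ∀ p : ℤ, c ≤ q * |q * x - p|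

/-- The quality `q |qx - p|` of the approximation `p / q` to `x`, deformed by a parameter `t` so
that it becomes invariant under the Gauss map (`approxForm_gauss_step`); `t = 0` gives back
`q |qx - p|`. -/
noncomputable def approxForm (x t q p : ℝ) : ℝ :=
  |q * x - p| * (q + p * t) / (1 + x * t)

lemma approxForm_gauss_step {a y t : ℝ} (ha : 0 < a) (hy : 0 ≤ y) (ht : 0 ≤ t) (p p' : ℝ) :
    approxForm (a + y)⁻¹ t (p * a + p') p = approxForm y (a + t)⁻¹ p p' := by
  have hay : 0 < a + y := by positivity
  have hdiff : (p * a + p') * (a + y)⁻¹ - p = -((p * y - p') / (a + y)) := by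
    field_simp
    ring
  have hsum : p * a + p' + p * t = (a + t) * (p + p' * (a + t)⁻¹) := by
    field_simp
    ring
  have hleft : 1 + (a + y)⁻¹ * t = (a + y + t) / (a + y) := by field_simp
  have hright : 1 + y * (a + t)⁻¹ = (a + y + t) / (a + t) := by
    field_simp
    ring
  rw [approxForm, approxForm, hdiff, abs_neg, abs_div, abs_of_pos hay, hsum, hleft, hright]
  field_simp

lemma cfa_gaussMap (x : ℝ) (n : ℕ) : cfa (gaussMap x) n = cfa x (n + 1) := rfl

lemma cfa_zero_add_gaussMap {x : ℝ} (hx : 0 ≤ x) : cfa x 0 + gaussMap x = x⁻¹ := by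
  have hfloor : (cfa x 0 : ℝ) = ⌊x⁻¹⌋ := natCast_floor_eq_intCast_floor (inv_nonneg.2 hx)
  rw [hfloor]
  exact Int.floor_add_fract x⁻¹

lemma cfa_zero_pos {x : ℝ} (hx0 : 0 < x) (hx1 : x ≤ 1) : 0 < cfa x 0 :=
  Nat.floor_pos.2 ((one_le_inv₀ hx0).2 hx1)

namespace IsBoundedType

variable {M : ℕ} {x t : ℝ}

lemma map_gaussMap (h : IsBoundedType M x) : IsBoundedType M (gaussMap x) where
  irrational := h.irrational.inv.sub_intCast ⌊x⁻¹⌋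
  pos := (Int.fract_nonneg x⁻¹).lt_of_ne' (h.irrational.inv.sub_intCast ⌊x⁻¹⌋).ne_zero
  lt_one := Int.fract_lt_one x⁻¹
  cfa_le n := (cfa_gaussMap x n).trans_le (h.cfa_le (n + 1))

lemma one_le_mul (h : IsBoundedType M x) : 1 ≤ x * (M + 1) := by
  have hinv : x⁻¹ ≤ M + 1 :=
    calc x⁻¹ ≤ cfa x 0 + 1 := (Nat.lt_floor_add_one x⁻¹).le
      _ ≤ M + 1 := by gcongr; exact h.cfa_le 0
  exact (inv_le_iff_one_le_mul₀' h.pos).1 hinv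

lemma le_approxForm_of_le (h : IsBoundedType M x) (ht0 : 0 ≤ t) (ht1 : t ≤ 1) {q p : ℝ}
    (hqp : x ≤ |q * x - p| * (q + p * t)) : 1 / (2 * (M + 1)) ≤ approxForm x t q p := by
  have hx := h.pos
  have hden : 1 + x * t ≤ 2 := by nlinarith [h.lt_one]
  rw [approxForm, div_le_div_iff₀ (by positivity) (by positivity)]
  calc 1 * (1 + x * t) ≤ 2 * (x * (M + 1)) := by linarith [h.one_le_mul]
    _ = x * (2 * (M + 1)) := by ring
    _ ≤ |q * x - p| * (q + p * t) * (2 * (M + 1)) := by gcongr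

lemma le_approxForm_of_lt_mul_cfa (h : IsBoundedType M x) (ht0 : 0 ≤ t) (ht1 : t ≤ 1) {q p : ℕ}
    (hq : 0 < q) (hqp : q < p * cfa x 0) : 1 / (2 * (M + 1)) ≤ approxForm x t q p := by
  refine h.le_approxForm_of_le ht0 ht1 ?_
  have hx := h.pos
  have hgap : (q : ℝ) + 1 ≤ p * x⁻¹ := by
    rw [← cfa_zero_add_gaussMap hx.le, mul_add]
    have hint : (q : ℝ) + 1 ≤ p * cfa x 0 := mod_cast hqp
    have hfract : 0 ≤ p * gaussMap x := mul_nonneg p.cast_nonneg h.map_gaussMap.pos.le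
    linarith
  have hdiff : x ≤ |q * x - p| :=
    calc x ≤ x * (p * x⁻¹ - q) := le_mul_of_one_le_right hx.le (by linarith)
      _ = -(q * x - p) := by field_simp; ring
      _ ≤ |q * x - p| := neg_le_abs _
  have hone : (1 : ℝ) ≤ q + p * t :=
    le_add_of_le_of_nonneg (mod_cast hq) (by positivity)
  exact hdiff.trans (le_mul_of_one_le_right (abs_nonneg _) hone)

-- The Gauss step replaces `(q, p)` by `(p, q - a₁p)`, so `q + p` decreases.
theorem le_approxForm (h : IsBoundedType M x) (ht0 : 0 ≤ t) (ht1 : t ≤ 1) {q : ℕ} (hq : 0 < q)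
    (p : ℕ) : 1 / (2 * (M + 1)) ≤ approxForm x t q p := by
  induction hn : q + p using Nat.strong_induction_on generalizing x t q p with
  | _ n ih =>
  obtain rfl | hp := Nat.eq_zero_or_pos p
  · refine h.le_approxForm_of_le ht0 ht1 ?_
    have hx := h.pos
    have hq1 : (1 : ℝ) ≤ q := mod_cast hq
    calc x ≤ x * (q * q) := le_mul_of_one_le_right hx.le (one_le_mul_of_one_le_of_one_le hq1 hq1)
      _ = |q * x - (0 : ℕ)| * (q + (0 : ℕ) * t) := by
        simp only [Nat.cast_zero, sub_zero, zero_mul, add_zero, abs_mul, Nat.abs_cast,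
          abs_of_pos hx]
        ring
  obtain hlt | hle := lt_or_ge q (p * cfa x 0)
  · exact h.le_approxForm_of_lt_mul_cfa ht0 ht1 hq hlt
  obtain ⟨p', rfl⟩ := Nat.exists_eq_add_of_le hle
  have ha : 0 < cfa x 0 := cfa_zero_pos h.pos h.lt_one.le
  have ha1 : (1 : ℝ) ≤ cfa x 0 := mod_cast ha
  have hstep : approxForm x t (p * cfa x 0 + p' : ℕ) p
      = approxForm (gaussMap x) (cfa x 0 + t)⁻¹ p p' := by
    rw [← approxForm_gauss_step (by positivity) h.map_gaussMap.pos.le ht0,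
      cfa_zero_add_gaussMap h.pos.le, inv_inv]
    push_cast
    rfl
  rw [hstep]
  exact ih (p + p') (by nlinarith) h.map_gaussMap (by positivity)
    (inv_le_one_of_one_le₀ (by linarith)) hp p' rfl

theorem badlyApproximableWith (h : IsBoundedType M x) :
    BadlyApproximableWith (1 / (2 * (M + 1))) x := by
  intro q hq p
  have hnat (p : ℕ) : 1 / (2 * ((M : ℝ) + 1)) ≤ q * |q * x - p| := by
    simpa [approxForm, mul_comm] using h.le_approxForm le_rfl zero_le_one hq p
  obtain hp | hp := le_total 0 p
  · lift p to ℕ using hp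
    exact mod_cast hnat p
  · have hp' : (p : ℝ) ≤ 0 := mod_cast hp
    have hqx : 0 ≤ q * x := mul_nonneg q.cast_nonneg h.pos.le
    calc 1 / (2 * ((M : ℝ) + 1)) ≤ q * |q * x - (0 : ℕ)| := hnat 0
      _ ≤ q * |q * x - p| := by
        rw [Nat.cast_zero, sub_zero, abs_of_nonneg hqx, abs_of_nonneg (by linarith)]
        gcongr
        linarith

end IsBoundedType

/-! ### Rotation orbits -/

lemma exists_lt_den_mul_num_eq (r : ℚ) (t : ℤ) :
    ∃ k < r.den, ∃ z : ℤ, k * r.num = t + r.den * z := by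
  obtain ⟨u, v, huv⟩ : IsCoprime r.num r.den := Int.isCoprime_iff_gcd_eq_one.2 r.reduced
  obtain ⟨k, hk, hmod⟩ := Int.existsUnique_equiv_nat (t * u) (mod_cast r.den_pos : (0 : ℤ) < r.den)
  obtain ⟨z, hz⟩ := hmod.symm.dvd
  exact ⟨k, mod_cast hk, z * r.num - t * v, by linear_combination r.num * hz + t * huv⟩

-- Modulo `1` the points `x - kr`, `k < r.den`, are equally spaced, and `x - kε` is within
-- `1 / r.den` of `x - kr`; so aim at the middle third of the arc.
lemma exists_rotation_mem_Ico_of_abs_sub_le {ε : ℝ} {r : ℚ} (hr : |ε - r| ≤ 1 / (r.den : ℝ) ^ 2)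
    (x a : ℝ) : ∃ k < r.den, ∃ z : ℤ, x - k * ε + z ∈ Set.Ico a (a + 3 / r.den) := by
  have hd : (0 : ℝ) < r.den := mod_cast r.den_pos
  obtain ⟨k, hk, z, hkz⟩ := exists_lt_den_mul_num_eq r (⌊(x - a) * r.den⌋ - 1)
  have hkz' : (k : ℝ) * r.num = ⌊(x - a) * r.den⌋ - 1 + r.den * z := mod_cast hkz
  have hnum : (r : ℝ) * r.den = r.num := mod_cast Rat.mul_den_eq_num r
  have herr : |k * (ε - r) * r.den| ≤ 1 := by
    rw [abs_mul, abs_mul, Nat.abs_cast, Nat.abs_cast]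
    calc (k : ℝ) * |ε - r| * r.den ≤ r.den * (1 / (r.den : ℝ) ^ 2) * r.den := by gcongr
      _ = 1 := by field_simp
  have hoffset : (x - k * ε + z - a) * r.den
      = Int.fract ((x - a) * r.den) + 1 - k * (ε - r) * r.den := by
    rw [Int.fract]
    linear_combination (-(k : ℝ)) * hnum - hkz'
  have hfract0 := Int.fract_nonneg ((x - a) * r.den)
  have hfract1 := Int.fract_lt_one ((x - a) * r.den)
  obtain ⟨herr1, herr2⟩ := abs_le.1 herr
  refine ⟨k, hk, z, ?_, ?_⟩
  · have : 0 ≤ x - k * ε + z - a := nonneg_of_mul_nonneg_left (by linarith) hd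
    linarith
  · have : x - k * ε + z - a < 3 / r.den := by
      rw [lt_div_iff₀ hd]
      linarith
    linarith

namespace BadlyApproximableWith

variable {c ε : ℝ} {N : ℕ}

lemma mul_le_den (h : BadlyApproximableWith c ε) {r : ℚ}
    (hr : |ε - r| ≤ 1 / ((N + 1) * r.den)) : c * (N + 1) ≤ r.den := by
  have : (0 : ℝ) < r.den := mod_cast r.den_pos
  have hnum : (r : ℝ) * r.den = r.num := mod_cast Rat.mul_den_eq_num r
  rw [← le_div_iff₀ (by positivity)]
  calc c ≤ r.den * |r.den * ε - r.num| := h r.den r.den_pos r.num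
    _ = r.den * (|ε - r| * r.den) := by
      rw [← hnum, ← mul_comm (r.den : ℝ) r, ← mul_sub, abs_mul, Nat.abs_cast, mul_comm |_|]
    _ ≤ r.den * (1 / ((N + 1) * r.den) * r.den) := by gcongr
    _ = r.den / (N + 1) := by field_simp

theorem exists_rotation_mem_Ico (h : BadlyApproximableWith c ε) (hc : 0 < c) (hN : 0 < N)
    (x a : ℝ) : ∃ k < N, ∃ z : ℤ, x - k * ε + z ∈ Set.Ico a (a + 3 / (c * N)) := by
  obtain ⟨r, hr, hrN⟩ := Real.exists_rat_abs_sub_le_and_den_le ε hN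
  have hd : (r.den : ℝ) ≤ N := mod_cast hrN
  have : (0 : ℝ) < r.den := mod_cast r.den_pos
  have hr' : |ε - r| ≤ 1 / (r.den : ℝ) ^ 2 := by
    refine hr.trans ?_
    rw [sq]
    gcongr
    linarith
  obtain ⟨k, hk, z, hz⟩ := exists_rotation_mem_Ico_of_abs_sub_le hr' x a
  refine ⟨k, hk.trans_le hrN, z, Set.Ico_subset_Ico_right ?_ hz⟩
  gcongr
  linarith [h.mul_le_den hr]

end BadlyApproximableWith

/-! ### The three-interval exchange as an induced rotation -/

namespace L3

/-- The number of steps of the rotation by `-ε` on `ℝ/ℤ` that make up one step of the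
three-interval exchange from a point of the interval of a letter. -/
def returnTime : L3 → ℕ
  | A => 1
  | B => 2
  | C => 1

/-- The integer that brings a point back to `[0,ℓ)` after `returnTime` translations by `-ε`. -/
def winding : L3 → ℤ
  | A => 1
  | B => 1
  | C => 0

lemma one_le_returnTime (X : L3) : 1 ≤ X.returnTime := by cases X <;> decide

lemma returnTime_le_two (X : L3) : X.returnTime ≤ 2 := by cases X <;> decide

lemma eq_B_of_one_lt_returnTime {X : L3} (h : 1 < X.returnTime) : X = B := by
  cases X <;> simp_all [returnTime]

end L3

section Orbit

variable {ε ℓ x : ℝ}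

lemma mapsTo_T3 (hε : ε < ℓ) (hℓ : 1 - ε ≤ ℓ) (hℓ1 : ℓ ≤ 1) :
    Set.MapsTo (T3 ε ℓ) (Set.Ico 0 ℓ) (Set.Ico 0 ℓ) := by
  rintro x ⟨hx0, hxℓ⟩
  unfold T3
  split_ifs <;> constructor <;> linarith

lemma T3_iterate_succ (ε ℓ x : ℝ) (n : ℕ) :
    (T3 ε ℓ)^[n + 1] x
      = (T3 ε ℓ)^[n] x - (u3 ε ℓ x n).returnTime * ε + (u3 ε ℓ x n).winding := by
  rw [Function.iterate_succ_apply', T3, u3]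
  split_ifs <;> simp only [L3.returnTime, L3.winding] <;> push_cast <;> ring

lemma u3_add (ε ℓ x : ℝ) (i j : ℕ) : u3 ε ℓ x (i + j) = u3 ε ℓ ((T3 ε ℓ)^[i] x) j := by
  simp only [u3, add_comm i j, Function.iterate_add_apply]

lemma u3_eq_C_iff (hℓ1 : ℓ ≤ 1) (n : ℕ) : u3 ε ℓ x n = L3.C ↔ ε ≤ (T3 ε ℓ)^[n] x := by
  unfold u3
  split_ifs with hA hB
  · simpa using hA.trans_le (by linarith)
  · simpa using hB
  · simpa using hB

lemma u3_eq_B_iff (n : ℕ) :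
    u3 ε ℓ x n = L3.B ↔ (T3 ε ℓ)^[n] x ∈ Set.Ico (ℓ - 1 + ε) ε := by
  unfold u3
  split_ifs with hA hB
  · simp [hA]
  · simpa [hB] using hA
  · simp [hB]

lemma exists_T3_iterate_eq (ε ℓ x : ℝ) (p : ℕ) : ∃ (Q : ℕ) (P : ℤ), p ≤ Q ∧ Q ≤ 2 * p ∧
    (T3 ε ℓ)^[p] x = x - Q * ε + P := by
  induction p with
  | zero => exact ⟨0, 0, le_rfl, le_rfl, by simp⟩
  | succ p ih =>
    obtain ⟨Q, P, hpQ, hQp, hp⟩ := ih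
    have hlow := (u3 ε ℓ x p).one_le_returnTime
    have hupp := (u3 ε ℓ x p).returnTime_le_two
    refine ⟨Q + (u3 ε ℓ x p).returnTime, P + (u3 ε ℓ x p).winding, by omega, by omega, ?_⟩
    rw [T3_iterate_succ, hp]
    push_cast
    ring

lemma BadlyApproximableWith.le_two_mul_mul_abs_T3_iterate_sub {c : ℝ}
    (h : BadlyApproximableWith c ε) (ℓ x : ℝ) {p : ℕ} (hp : 0 < p) :
    c ≤ 2 * p * |(T3 ε ℓ)^[p] x - x| := by
  obtain ⟨Q, P, hpQ, hQp, hiter⟩ := exists_T3_iterate_eq ε ℓ x p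
  calc c ≤ Q * |Q * ε - P| := h Q (hp.trans_le hpQ) P
    _ = Q * |(T3 ε ℓ)^[p] x - x| := by rw [hiter, ← abs_neg]; ring_nf
    _ ≤ 2 * p * |(T3 ε ℓ)^[p] x - x| := by gcongr; exact mod_cast hQp

lemma returnTime_le_of_mem_Ico {k : ℕ} (hk : 0 < k) {z : ℤ}
    (hz : x - k * ε + z ∈ Set.Ico 0 ℓ) : (u3 ε ℓ x 0).returnTime ≤ k := by
  by_contra! hlt
  obtain rfl : k = 1 := by have := (u3 ε ℓ x 0).returnTime_le_two; omega
  obtain ⟨hxA, hxε⟩ : x ∈ Set.Ico (ℓ - 1 + ε) ε :=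
    (u3_eq_B_iff 0).1 (L3.eq_B_of_one_lt_returnTime hlt)
  rw [Nat.cast_one, one_mul] at hz
  have hpos : (0 : ℝ) < z := by linarith [hz.1]
  have hlt_one : (z : ℝ) < 1 := by linarith [hz.2]
  norm_cast at hpos hlt_one
  omega

theorem exists_le_T3_iterate_eq_rotation (hε : ε < ℓ) (hℓ : 1 - ε ≤ ℓ) (hℓ1 : ℓ ≤ 1)
    (hx : x ∈ Set.Ico 0 ℓ) {k : ℕ} {z : ℤ} (hz : x - k * ε + z ∈ Set.Ico 0 ℓ) :
    ∃ j ≤ k, (T3 ε ℓ)^[j] x = x - k * ε + z := by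
  induction k using Nat.strong_induction_on generalizing x z with
  | _ k ih =>
  obtain rfl | hk := Nat.eq_zero_or_pos k
  · have hlow : (-1 : ℝ) < z := by have := hz.1; push_cast at this; linarith [hx.2]
    have hupp : (z : ℝ) < 1 := by have := hz.2; push_cast at this; linarith [hx.1]
    norm_cast at hlow hupp
    obtain rfl : z = 0 := by omega
    exact ⟨0, le_rfl, by simp⟩
  · set X := u3 ε ℓ x 0
    have hXk : X.returnTime ≤ k := returnTime_le_of_mem_Ico hk hz
    have hX1 : 1 ≤ X.returnTime := X.one_le_returnTime
    have hT : T3 ε ℓ x = x - X.returnTime * ε + X.winding := T3_iterate_succ ε ℓ x 0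
    have htarget : T3 ε ℓ x - (k - X.returnTime : ℕ) * ε + (z - X.winding : ℤ)
        = x - k * ε + z := by
      rw [hT]
      push_cast [hXk]
      ring
    obtain ⟨j, hj, hjT⟩ := ih (k - X.returnTime) (by omega) (mapsTo_T3 hε hℓ hℓ1 hx)
      (htarget ▸ hz)
    exact ⟨j + 1, by omega, by rw [Function.iterate_succ_apply, hjT, htarget]⟩

theorem BadlyApproximableWith.exists_T3_iterate_mem_Ico {c : ℝ} (h : BadlyApproximableWith c ε)
    (hc : 0 < c) (hε : ε < ℓ) (hℓ : 1 - ε ≤ ℓ) (hℓ1 : ℓ ≤ 1) (hx : x ∈ Set.Ico 0 ℓ) {N : ℕ}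
    (hN : 0 < N) {a b : ℝ} (ha : 0 ≤ a) (hb : b ≤ ℓ) (hab : 3 / (c * N) ≤ b - a) :
    ∃ j < N, (T3 ε ℓ)^[j] x ∈ Set.Ico a b := by
  obtain ⟨k, hk, z, hz⟩ := h.exists_rotation_mem_Ico hc hN x a
  have hzab : x - k * ε + z ∈ Set.Ico a b := Set.Ico_subset_Ico_right (by linarith) hz
  obtain ⟨j, hj, hjz⟩ :=
    exists_le_T3_iterate_eq_rotation hε hℓ hℓ1 hx (Set.Ico_subset_Ico ha hb hzab)
  exact ⟨j, hj.trans_lt hk, hjz ▸ hzab⟩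

/-! ### Periodic windows -/

variable {p : ℕ}

lemma T3_iterate_add_of_periodic {n : ℕ} (hper : ∀ j < n, u3 ε ℓ x (j + p) = u3 ε ℓ x j) :
    ∀ j ≤ n, (T3 ε ℓ)^[j + p] x = (T3 ε ℓ)^[j] x + ((T3 ε ℓ)^[p] x - x) := by
  intro j hj
  induction j with
  | zero => simp
  | succ j ih =>
    rw [add_right_comm, T3_iterate_succ, T3_iterate_succ, hper j hj, ih (by omega)]
    ring

lemma T3_iterate_mul_of_periodic {K : ℕ}
    (hper : ∀ j < K * p, u3 ε ℓ x (j + p) = u3 ε ℓ x j) :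
    ∀ k ≤ K, (T3 ε ℓ)^[k * p] x = x + k * ((T3 ε ℓ)^[p] x - x) := by
  intro k hk
  induction k with
  | zero => simp
  | succ k ih =>
    rw [add_one_mul, T3_iterate_add_of_periodic hper _ (Nat.mul_le_mul_right p (by omega)),
      ih (by omega)]
    push_cast
    ring

lemma mul_abs_T3_iterate_sub_lt_one_of_periodic (hε : ε < ℓ) (hℓ : 1 - ε ≤ ℓ) (hℓ1 : ℓ ≤ 1)
    (hx : x ∈ Set.Ico 0 ℓ) {K : ℕ} (hper : ∀ j < K * p, u3 ε ℓ x (j + p) = u3 ε ℓ x j) :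
    K * |(T3 ε ℓ)^[p] x - x| < 1 := by
  have hmem := (mapsTo_T3 hε hℓ hℓ1).iterate (K * p) hx
  rw [T3_iterate_mul_of_periodic hper K le_rfl] at hmem
  rw [← Nat.abs_cast K, ← abs_mul, abs_lt]
  constructor <;> linarith [hmem.1, hmem.2, hx.1, hx.2]

lemma le_T3_iterate_add_iff_of_periodic (hℓ1 : ℓ ≤ 1) {n : ℕ}
    (hper : ∀ j < n, u3 ε ℓ x (j + p) = u3 ε ℓ x j) {j : ℕ} (hj : j < n) :
    ε ≤ (T3 ε ℓ)^[j] x + ((T3 ε ℓ)^[p] x - x) ↔ ε ≤ (T3 ε ℓ)^[j] x := by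
  rw [← T3_iterate_add_of_periodic hper j hj.le, ← u3_eq_C_iff hℓ1, ← u3_eq_C_iff hℓ1, hper j hj]

theorem BadlyApproximableWith.exists_u3_add_ne {c : ℝ} (h : BadlyApproximableWith c ε)
    (hc : 0 < c) (hε : ε < ℓ) (hℓ : 1 - ε ≤ ℓ) (hℓ1 : ℓ ≤ 1)
    (hx : x ∈ Set.Ico 0 ℓ) (hp : 0 < p) {K : ℕ} (hKc : 6 ≤ K * c ^ 2) (hKε : 1 ≤ K * ε)
    (hKℓ : 1 ≤ K * (ℓ - ε)) : ∃ j < K * p, u3 ε ℓ x (j + p) ≠ u3 ε ℓ x j := by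
  by_contra! hper
  have hK : 0 < K := Nat.pos_of_ne_zero fun hK => by norm_num [hK] at hKε
  have hK' : (0 : ℝ) < K := mod_cast hK
  set δ := (T3 ε ℓ)^[p] x - x
  have hKδ : K * |δ| < 1 := mul_abs_T3_iterate_sub_lt_one_of_periodic hε hℓ hℓ1 hx hper
  have hδε : |δ| ≤ ε := le_of_mul_le_mul_left (hKδ.le.trans hKε) hK'
  have hδℓ : |δ| ≤ ℓ - ε := le_of_mul_le_mul_left (hKδ.le.trans hKℓ) hK'
  have hδ : 3 / (c * (K * p : ℕ)) ≤ |δ| := by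
    rw [div_le_iff₀ (by positivity)]
    push_cast
    calc (3 : ℝ) ≤ c * K * c / 2 := by linarith
      _ ≤ c * K * (2 * p * |δ|) / 2 := by gcongr; exact h.le_two_mul_mul_abs_T3_iterate_sub ℓ x hp
      _ = |δ| * (c * (K * p)) := by ring
  have hvisit {a b : ℝ} (ha : 0 ≤ a) (hb : b ≤ ℓ) (hab : |δ| = b - a) :
      ∃ j < K * p, (T3 ε ℓ)^[j] x ∈ Set.Ico a b :=
    h.exists_T3_iterate_mem_Ico hc hε hℓ hℓ1 hx (Nat.mul_pos hK hp) ha hb (hab ▸ hδ)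
  obtain hsign | hsign := le_total 0 δ
  · rw [abs_of_nonneg hsign] at hδε hvisit
    obtain ⟨j, hj, hja, hjb⟩ := hvisit (a := ε - δ) (b := ε) (by linarith) hε.le (by ring)
    linarith [(le_T3_iterate_add_iff_of_periodic hℓ1 hper hj).1 (by linarith)]
  · rw [abs_of_nonpos hsign] at hδℓ hvisit
    obtain ⟨j, hj, hja, hjb⟩ := hvisit (a := ε) (b := ε - δ) (by linarith) (by linarith) (by ring)
    linarith [(le_T3_iterate_add_iff_of_periodic hℓ1 hper hj).2 hja]

end Orbit

/-! ### Words of infinite index -/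

section Index

variable {α : Type*} [Inhabited α] {u : ℕ → α}

lemma IsFactor.exists_apply_add_eq_getD {w : List α} {m : ℕ} (h : IsFactor (powPrefix w m) u) :
    ∃ i, ∀ j < m, u (i + j) = w.getD (j % w.length) default := by
  obtain ⟨i, hi⟩ := h
  refine ⟨i, fun j hj => ?_⟩
  have hlen : (powPrefix w m).length = m := by simp [powPrefix]
  rw [hlen, powPrefix, List.map_inj_left] at hi
  exact (hi j (List.mem_range.2 hj)).symm

lemma exists_isFactor_powPrefix_of_lt_wordIndex {r : ℝ} (h : r < wordIndex u) :
    ∃ (w : List α) (m : ℕ), w ≠ [] ∧ IsFactor (powPrefix w m) u ∧ r * w.length < m := by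
  obtain ⟨_, ⟨w, hw, -, rfl⟩, hr⟩ := lt_sSup_iff.1 h
  obtain ⟨_, ⟨m, -, hm, rfl⟩, hr⟩ := lt_sSup_iff.1 hr
  have hlen : (0 : ℝ) < w.length := mod_cast List.length_pos_iff.2 hw
  exact ⟨w, m, hw, hm, (lt_div_iff₀ hlen).1 (EReal.coe_lt_coe_iff.1 hr)⟩

theorem exists_periodic_window_of_wordIndex_eq_top (h : wordIndex u = ⊤) (K : ℕ) :
    ∃ p i : ℕ, 0 < p ∧ ∀ j < K * p, u (i + (j + p)) = u (i + j) := by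
  obtain ⟨w, m, hw, hfactor, hm⟩ :=
    exists_isFactor_powPrefix_of_lt_wordIndex (r := (K + 1 : ℕ)) (h ▸ EReal.coe_lt_top _)
  obtain ⟨i, hi⟩ := hfactor.exists_apply_add_eq_getD
  norm_cast at hm
  rw [add_one_mul] at hm
  refine ⟨w.length, i, List.length_pos_iff.2 hw, fun j hj => ?_⟩
  rw [hi _ (by omega), hi _ (by omega), Nat.add_mod_right]

end Index

theorem BadlyApproximableWith.wordIndex_u3_ne_top {c ε ℓ x : ℝ} (h : BadlyApproximableWith c ε)
    (hc : 0 < c) (hε0 : 0 < ε) (hε : ε < ℓ) (hℓ : 1 - ε ≤ ℓ) (hℓ1 : ℓ ≤ 1)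
    (hx : x ∈ Set.Ico 0 ℓ) : wordIndex (u3 ε ℓ x) ≠ ⊤ := by
  intro htop
  have hℓε : 0 < ℓ - ε := sub_pos.2 hε
  obtain ⟨K, hK⟩ := exists_nat_ge (max (6 / c ^ 2) (max (1 / ε) (1 / (ℓ - ε))))
  obtain ⟨hKc, hKε, hKℓ⟩ : 6 ≤ K * c ^ 2 ∧ 1 ≤ K * ε ∧ 1 ≤ K * (ℓ - ε) := by
    simpa only [max_le_iff, div_le_iff₀ (pow_pos hc 2), div_le_iff₀ hε0, div_le_iff₀ hℓε] using hK
  obtain ⟨p, i, hp, hper⟩ := exists_periodic_window_of_wordIndex_eq_top htop K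
  obtain ⟨j, hj, hne⟩ := h.exists_u3_add_ne hc hε hℓ hℓ1
    ((mapsTo_T3 hε hℓ hℓ1).iterate i hx) hp hKc hKε hKℓ
  exact hne (by rw [← u3_add, ← u3_add, hper j hj])

/-- if a 3iet word has infinite index then the partial quotients of `ε`
are unbounded, i.e. `sup_n a_n = +∞`. -/
theorem threeIet_infinite_index_implies_unbounded_partial_quotients
    (ε ℓ x0 : ℝ) (hirr : Irrational ε) (h0 : 0 < ε) (h1 : ε < 1)
    (hl : max ε (1 - ε) < ℓ) (hl1 : ℓ < 1) (hx0 : x0 ∈ Set.Ico 0 ℓ)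
    (hind : wordIndex (u3 ε ℓ x0) = ⊤) :
    (⨆ n : ℕ, (cfa ε n : ℕ∞)) = ⊤ := by
  rw [ENat.iSup_natCast_eq_top]
  rintro ⟨M, hM⟩
  have hbounded : IsBoundedType M ε := ⟨hirr, h0, h1, fun n => hM ⟨n, rfl⟩⟩
  obtain ⟨hε, hℓ⟩ := max_lt_iff.1 hl
  exact hbounded.badlyApproximableWith.wordIndex_u3_ne_top (by positivity) h0 hε hℓ.le hl1.le
    hx0 hind
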